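/- Let n ≥ 1, let A be an n×n integer matrix, let μ₁ ≠ μ₂ be real numbers, and let v₁, v₂ ∈ ℝⁿ be nonzero vectors with A v₁ = μ₁ v₁, A v₂ = μ₂ v₂, and such that v := v₁ + v₂ has integer coordinates, v ∈ ℤⁿ. Then the subgroup {x ∈ ℤⁿ : x ∈ span_ℝ{v₁, v₂}} of ℤⁿ is a free abelian group of rank exactly 2. -/

import Mathlib

/-!
Let `L` be the lattice of integral points of the plane. Its real span is stable under `A` and
contains the integral vector `v₁ + v₂`; an `A`-stable subspace containing a sum of eigenvectors with
distinct eigenvalues contains each of them, so the real span of `L` is the whole plane. Since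
integral vectors that are independent over `ℤ` stay independent over `ℝ`, the rank of `L` is the
dimension of its real span.
-/

/-- The coordinatewise coercion `ℤⁿ → ℝⁿ`, as a `ℤ`-linear map. -/
noncomputable def intCastPiLinearMap (n : ℕ) : (Fin n → ℤ) →ₗ[ℤ] (Fin n → ℝ) :=
  LinearMap.pi fun i => (Int.castAddHom ℝ).toIntLinearMap.comp (LinearMap.proj i)

open Submodule

section IntegralPoints

variable {R K ι : Type*} [CommRing R] [CommRing K] [Algebra R K]

variable (R) in
/-- The vectors with coordinates in `R` of a submodule `W` of `K^ι`, that is `W ∩ R^ι`, encoded as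
a submodule of `R^ι`. -/
def integralPoints (W : Submodule K (ι → K)) : Submodule R (ι → R) :=
  (W.restrictScalars R).comap (Pi.algebraMap ι R K)

variable (K) in
/-- The `K`-submodule of `K^ι` generated by a submodule `L` of `R^ι`. -/
def extendScalars (L : Submodule R (ι → R)) : Submodule K (ι → K) :=
  span K (L.map (Pi.algebraMap ι R K))

theorem mem_integralPoints {W : Submodule K (ι → K)} {x : ι → R} :
    x ∈ integralPoints R W ↔ Pi.algebraMap ι R K x ∈ W :=
  Iff.rfl

theorem extendScalars_le_iff_le_integralPoints {L : Submodule R (ι → R)}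
    {W : Submodule K (ι → K)} : extendScalars K L ≤ W ↔ L ≤ integralPoints R W :=
  span_le.trans Set.image_subset_iff

theorem algebraMap_mem_extendScalars {L : Submodule R (ι → R)} {x : ι → R} (hx : x ∈ L) :
    Pi.algebraMap ι R K x ∈ extendScalars K L :=
  subset_span (mem_map_of_mem hx)

theorem finrank_extendScalars [FaithfulSMul R K] [IsDomain K] [Finite ι]
    (L : Submodule R (ι → R)) [Module.Free R L] :
    Module.finrank K (extendScalars K L) = Module.finrank R L := by
  have : IsDomain R := .of_faithfulSMul R K
  let b := Module.Free.chooseBasis R L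
  have hb : LinearIndependent K fun i ↦ algebraMap R K ∘ (b i : ι → R) :=
    linearIndependent_algebraMap_comp_iff.mpr <| b.linearIndependent.map' L.subtype L.ker_subtype
  have hspan : extendScalars K L = span K (Set.range fun i ↦ algebraMap R K ∘ (b i : ι → R)) :=
    calc extendScalars K L
      _ = span K ((span R (Set.range (L.subtype ∘ b))).map (Pi.algebraMap ι R K)) := by
        rw [Set.range_comp, ← map_span, b.span_eq, Submodule.map_top, range_subtype, extendScalars]
      _ = span K (Set.range (Pi.algebraMap ι R K ∘ L.subtype ∘ b)) := by
        rw [map_span, span_span_of_tower, ← Set.range_comp]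
  rw [hspan, Module.finrank_eq_nat_card_basis (Module.Basis.span hb),
    Module.finrank_eq_nat_card_basis b]

variable [Fintype ι] (A : Matrix ι ι R)

theorem algebraMap_mulVec (x : ι → R) :
    Pi.algebraMap ι R K (A.mulVec x) =
      (A.map (algebraMap R K)).mulVec (Pi.algebraMap ι R K x) :=
  funext <| RingHom.map_mulVec (algebraMap R K) A x

variable {A}

theorem integralPoints_mem_invtSubmodule {W : Submodule K (ι → K)}
    (hW : W ∈ Module.End.invtSubmodule (A.map (algebraMap R K)).mulVecLin) :
    integralPoints R W ∈ Module.End.invtSubmodule A.mulVecLin := by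
  intro x hx
  rw [mem_comap, Matrix.mulVecLin_apply, mem_integralPoints, algebraMap_mulVec]
  exact hW hx

theorem extendScalars_mem_invtSubmodule {L : Submodule R (ι → R)}
    (hL : L ∈ Module.End.invtSubmodule A.mulVecLin) :
    extendScalars K L ∈ Module.End.invtSubmodule (A.map (algebraMap R K)).mulVecLin := by
  rw [Module.End.mem_invtSubmodule, extendScalars_le_iff_le_integralPoints]
  intro x hx
  rw [mem_integralPoints, mem_comap, Matrix.mulVecLin_apply, ← algebraMap_mulVec]
  exact algebraMap_mem_extendScalars (hL hx)

end IntegralPoints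

section Eigenvectors

variable {κ : Type*}

theorem span_range_mem_invtSubmodule_of_mem_eigenspace {R M : Type*} [CommRing R]
    [AddCommGroup M] [Module R M] {f : Module.End R M} {μ : κ → R} {v : κ → M}
    (hv : ∀ k, v k ∈ f.eigenspace (μ k)) : span R (Set.range v) ∈ f.invtSubmodule := by
  rw [Module.End.mem_invtSubmodule, span_le]
  rintro _ ⟨k, rfl⟩
  have hfv : f (v k) = μ k • v k := Module.End.mem_eigenspace_iff.mp (hv k)
  rw [SetLike.mem_coe, mem_comap, hfv]
  exact smul_mem _ _ (subset_span ⟨k, rfl⟩)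

-- In the quotient by `p` the images of the `v k` are eigenvectors or zero, and they sum to zero.
theorem mem_of_sum_mem_of_mem_eigenspace {K V : Type*} [Field K] [AddCommGroup V] [Module K V]
    {f : Module.End K V} {p : Submodule K V} (hp : p ∈ f.invtSubmodule)
    {μ : κ → K} (hμ : Function.Injective μ) {v : κ → V} (hv : ∀ k, v k ∈ f.eigenspace (μ k))
    {s : Finset κ} (hs : ∑ k ∈ s, v k ∈ p) {k : κ} (hk : k ∈ s) : v k ∈ p := by
  let g : Module.End K (V ⧸ p) := p.mapQ p f hp
  have hg (k : κ) : p.mkQ (v k) ∈ g.eigenspace (μ k) := by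
    have hfv : f (v k) = μ k • v k := Module.End.mem_eigenspace_iff.mp (hv k)
    rw [Module.End.mem_eigenspace_iff, mkQ_apply, ← Quotient.mk_smul, ← hfv]
    exact mapQ_apply p p f (v k)
  have hsum : ∑ k ∈ s, p.mkQ (v k) = 0 := by
    rwa [← map_sum, mkQ_apply, Quotient.mk_eq_zero]
  have hzero := (iSupIndep_iff_finsetSum_eq_zero_imp_eq_zero _).mp
    (g.eigenspaces_iSupIndep.comp hμ) s _ (fun k _ ↦ hg k) hsum k hk
  exact (Quotient.mk_eq_zero p).mp hzero

end Eigenvectors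

section IntegralSum

variable {R K ι κ : Type*} [CommRing R] [Field K] [Algebra R K] [Fintype ι] [Fintype κ]
  {A : Matrix ι ι R} {μ : κ → K} {v : κ → ι → K} {w : ι → R}

theorem extendScalars_integralPoints_span_eigenvectors (hμ : Function.Injective μ)
    (hv : ∀ k, v k ∈ Module.End.eigenspace (A.map (algebraMap R K)).mulVecLin (μ k))
    (hw : Pi.algebraMap ι R K w = ∑ k, v k) :
    extendScalars K (integralPoints R (span K (Set.range v))) = span K (Set.range v) := by
  refine le_antisymm (extendScalars_le_iff_le_integralPoints.mpr le_rfl) ?_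
  have hinv := extendScalars_mem_invtSubmodule (K := K) <| integralPoints_mem_invtSubmodule <|
    span_range_mem_invtSubmodule_of_mem_eigenspace hv
  have hw_mem : w ∈ integralPoints R (span K (Set.range v)) := by
    rw [mem_integralPoints, hw]
    exact sum_mem fun k _ ↦ subset_span ⟨k, rfl⟩
  have hsum := algebraMap_mem_extendScalars (K := K) hw_mem
  rw [hw] at hsum
  rw [span_le, Set.range_subset_iff]
  exact fun k ↦ mem_of_sum_mem_of_mem_eigenspace hinv hμ hv hsum (Finset.mem_univ k)

theorem lattice_in_invariant_plane_rank_two_general [IsDomain R] [IsPrincipalIdealRing R]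
    [FaithfulSMul R K] (hμ : Function.Injective μ)
    (hv : ∀ k, Module.End.HasEigenvector (A.map (algebraMap R K)).mulVecLin (μ k) (v k))
    (hw : Pi.algebraMap ι R K w = ∑ k, v k) :
    Module.Free R (integralPoints R (span K (Set.range v))) ∧
      Module.finrank R (integralPoints R (span K (Set.range v))) = Fintype.card κ := by
  refine ⟨inferInstance, ?_⟩
  rw [← finrank_extendScalars (K := K),
    extendScalars_integralPoints_span_eigenvectors hμ (fun k ↦ (hv k).1) hw]
  exact finrank_span_eq_card (Module.End.eigenvectors_linearIndependent' _ μ hμ v hv)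

end IntegralSum

/-- Let `A` be an `n × n` integer matrix, `μ₁ ≠ μ₂` real numbers, and `v₁, v₂ ∈ ℝⁿ`
nonzero eigenvectors with `A v₁ = μ₁ v₁`, `A v₂ = μ₂ v₂`, such that `v := v₁ + v₂` has
integer coordinates. Then the subgroup `{x ∈ ℤⁿ : x ∈ span_ℝ {v₁, v₂}}` of `ℤⁿ` is a free
abelian group of rank exactly `2`. -/
theorem lattice_in_invariant_plane_rank_two
    (n : ℕ) (hn : 1 ≤ n) (A : Matrix (Fin n) (Fin n) ℤ)
    (μ₁ μ₂ : ℝ) (hμ : μ₁ ≠ μ₂) (v₁ v₂ : Fin n → ℝ) (hv₁ : v₁ ≠ 0) (hv₂ : v₂ ≠ 0)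
    (h₁ : (A.map (Int.cast : ℤ → ℝ)).mulVec v₁ = μ₁ • v₁)
    (h₂ : (A.map (Int.cast : ℤ → ℝ)).mulVec v₂ = μ₂ • v₂)
    (v : Fin n → ℤ) (hv : intCastPiLinearMap n v = v₁ + v₂) :
    Module.Free ℤ
      ↥(((Submodule.span ℝ {v₁, v₂}).restrictScalars ℤ).comap (intCastPiLinearMap n)) ∧
    Module.finrank ℤ
      ↥(((Submodule.span ℝ {v₁, v₂}).restrictScalars ℤ).comap (intCastPiLinearMap n)) = 2 := by
  have hμ_inj : Function.Injective ![μ₁, μ₂] := by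
    simpa [Function.Injective, Fin.forall_fin_two] using ⟨hμ, hμ.symm⟩
  have hvec : ∀ k, Module.End.HasEigenvector (A.map (algebraMap ℤ ℝ)).mulVecLin
      (![μ₁, μ₂] k) (![v₁, v₂] k) :=
    Fin.forall_fin_two.mpr ⟨⟨Module.End.mem_eigenspace_iff.mpr h₁, hv₁⟩,
      ⟨Module.End.mem_eigenspace_iff.mpr h₂, hv₂⟩⟩
  have hsum : Pi.algebraMap (Fin n) ℤ ℝ v = ∑ k, ![v₁, v₂] k := by
    rw [Fin.sum_univ_two]
    exact hv
  have hrank := lattice_in_invariant_plane_rank_two_general hμ_inj hvec hsum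
  rwa [Matrix.range_cons_cons_empty] at hrank
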